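/- arXiv:1902.01751 — 2 statements merged into one kernel-verified Lean document; each statement's English description precedes it below -/
import Mathlib

section
/- For the weight a = (3,8,12) (the weight of the E₁₄-singularity), there exist 3×3 matrices C and D with non-negative integer entries such that |det D| = 1, B_a = C·D, (3,8,12) = (1,1,1)·D, f_C(x,y,z) = x³ + y⁴ + yz² after a permutation of the variables (x,y,z) (the normal form of the strange dual singularity Q₁₀), and f_C has an isolated critical point at the origin of ℂ³ (all partial derivatives of f_C vanish at 0, and there is a punctured neighborhood of 0 containing no critical point of f_C). -/
open Matrix BigOperators

noncomputable section

/-- `f_C(x,y,z) = Σ_{i=1}^{3} x^{c_{i1}} y^{c_{i2}} z^{c_{i3}}` for a 3×3 matrix `C`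
with non-negative integer entries. -/
def fC (C : Matrix (Fin 3) (Fin 3) ℕ) : (Fin 3 → ℂ) → ℂ :=
  fun v => ∑ i : Fin 3, ∏ j : Fin 3, v j ^ C i j

/-- `φ_D(u₁,u₂,u₃) = (u₁^{d_{i1}} u₂^{d_{i2}} u₃^{d_{i3}})_{i=1}^{3}`. -/
def phiD (D : Matrix (Fin 3) (Fin 3) ℕ) : (Fin 3 → ℂ) → (Fin 3 → ℂ) :=
  fun u i => ∏ j : Fin 3, u j ^ D i j

/-- The matrix `B_a` with rows `(a₁+1,a₂,a₃)`, `(a₁,a₂+1,a₃)`, `(a₁,a₂,a₃+1)`. -/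
def Bmat (a : Fin 3 → ℕ) : Matrix (Fin 3) (Fin 3) ℕ :=
  fun i j => a j + if i = j then 1 else 0

/-- `G_a(u₁,u₂,u₃) = u₁^{a₁+1}u₂^{a₂}u₃^{a₃} + u₁^{a₁}u₂^{a₂+1}u₃^{a₃} + u₁^{a₁}u₂^{a₂}u₃^{a₃+1}`. -/
def Ga (a : Fin 3 → ℕ) : (Fin 3 → ℂ) → ℂ :=
  fun u => u 0 ^ (a 0 + 1) * u 1 ^ a 1 * u 2 ^ a 2
         + u 0 ^ a 0 * u 1 ^ (a 1 + 1) * u 2 ^ a 2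
         + u 0 ^ a 0 * u 1 ^ a 1 * u 2 ^ (a 2 + 1)

/-- `H_a(u₁,u₂,u₃) = u₁^{a₁}u₂^{a₂}u₃^{a₃}`. -/
def Ha (a : Fin 3 → ℕ) : (Fin 3 → ℂ) → ℂ :=
  fun u => u 0 ^ a 0 * u 1 ^ a 1 * u 2 ^ a 2

/-- Determinant of a matrix of natural numbers, computed over `ℤ`. -/
def detZ (M : Matrix (Fin 3) (Fin 3) ℕ) : ℤ :=
  (M.map (fun n : ℕ => (n : ℤ))).det

/-- `f` has an isolated critical point at the origin of `ℂ³`: the derivative of `f`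
vanishes at `0`, and there is a punctured neighborhood of `0` containing no critical
point of `f`. -/
def IsolatedCriticalAtZero (f : (Fin 3 → ℂ) → ℂ) : Prop :=
  fderiv ℂ f 0 = 0 ∧
  ∃ ε : ℝ, ε > 0 ∧ ∀ p : Fin 3 → ℂ, p ≠ 0 → ‖p‖ < ε → fderiv ℂ f p ≠ 0

theorem fC_aux (p : Fin 3 → ℂ) :
    fC !![0, 4, 0; 3, 0, 0; 0, 1, 2] p = p 0 ^ 3 + p 1 ^ 4 + p 1 * p 2 ^ 2 := by
  simp [fC, Fin.sum_univ_three, Fin.prod_univ_three]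
  ring

theorem fC_hasFDerivAt (p : Fin 3 → ℂ) :
    HasFDerivAt (fC !![0, 4, 0; 3, 0, 0; 0, 1, 2])
      ((3 * p 0 ^ 2) • (ContinuousLinearMap.proj 0 : (Fin 3 → ℂ) →L[ℂ] ℂ)
        + (4 * p 1 ^ 3 + p 2 ^ 2) • (ContinuousLinearMap.proj 1 : (Fin 3 → ℂ) →L[ℂ] ℂ)
        + (2 * p 1 * p 2) • (ContinuousLinearMap.proj 2 : (Fin 3 → ℂ) →L[ℂ] ℂ)) p := by
  have e : fC !![0, 4, 0; 3, 0, 0; 0, 1, 2]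
      = fun p => p 0 ^ 3 + p 1 ^ 4 + p 1 * p 2 ^ 2 := funext fC_aux
  rw [e]
  have h (i : Fin 3) : HasFDerivAt (fun q : Fin 3 → ℂ => q i)
      (ContinuousLinearMap.proj i : (Fin 3 → ℂ) →L[ℂ] ℂ) p := hasFDerivAt_apply i p
  refine ((((h 0).pow 3).add ((h 1).pow 4)).add ((h 1).mul ((h 2).pow 2))).congr_fderiv ?_
  ext v
  simp
  ring

theorem stmt_8 :
    ∃ C D : Matrix (Fin 3) (Fin 3) ℕ,
      |detZ D| = 1 ∧
      Bmat ![3, 8, 12] = C * D ∧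
      (∀ j, (∑ i : Fin 3, D i j) = ![3, 8, 12] j) ∧
      (∃ σ : Equiv.Perm (Fin 3),
        ∀ x y z : ℂ, fC C (fun i => ![x, y, z] (σ i)) = x ^ 3 + y ^ 4 + y * z ^ 2) ∧
      IsolatedCriticalAtZero (fC C) := by
  refine ⟨!![0, 4, 0; 3, 0, 0; 0, 1, 2], !![1, 3, 4; 1, 2, 3; 1, 3, 5], ?_, ?_, ?_, ?_, ?_⟩
  · simp [detZ, Matrix.det_fin_three]
  · ext i j
    fin_cases i <;> fin_cases j <;> simp [Bmat, Matrix.mul_apply, Fin.sum_univ_three]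
  · intro j
    fin_cases j <;> simp [Fin.sum_univ_three]
  · refine ⟨1, fun x y z => ?_⟩
    rw [fC_aux]
    simp
  · refine ⟨?_, 1, one_pos, fun p hp _ h => hp ?_⟩
    · rw [(fC_hasFDerivAt 0).fderiv]
      ext v
      simp
    · rw [(fC_hasFDerivAt p).fderiv] at h
      have h0 := DFunLike.congr_fun h (Pi.single 0 1)
      have h1 := DFunLike.congr_fun h (Pi.single 1 1)
      have h2 := DFunLike.congr_fun h (Pi.single 2 1)
      simp at h0 h1 h2
      have h12 : p 1 = 0 ∧ p 2 = 0 := by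
        rcases h2 with h2 | h2 <;> simp [h2] at h1 <;> exact ⟨by assumption, by assumption⟩
      ext i
      fin_cases i
      · exact h0
      · exact h12.1
      · exact h12.2
end
end

section
/- For the weight a = (3,5,9) (the weight of the Z₁₃-singularity), there exist 3×3 matrices C and D with non-negative integer entries such that |det D| = 1, B_a = C·D, (3,5,9) = (1,1,1)·D, f_C(x,y,z) = x³ + y²z + xz³ after a permutation of the variables (x,y,z) (the normal form of the strange dual singularity Q₁₁), and f_C has an isolated critical point at the origin of ℂ³ (all partial derivatives of f_C vanish at 0, and there is a punctured neighborhood of 0 containing no critical point of f_C). -/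
open Matrix BigOperators

noncomputable section

theorem fC_eq_aux : fC !![1,0,3;3,0,0;0,2,1] =
    fun v => v 0 * v 2 ^ 3 + v 0 ^ 3 + v 1 ^ 2 * v 2 := by
  funext v
  simp [fC, Fin.sum_univ_three, Fin.prod_univ_three]

theorem fC_deriv_aux (p : Fin 3 → ℂ) : ∃ L : (Fin 3 → ℂ) →L[ℂ] ℂ,
    HasFDerivAt (fC !![1,0,3;3,0,0;0,2,1]) L p ∧
    ∀ h, L h = (3 * p 0 ^ 2 + p 2 ^ 3) * h 0 + 2 * p 1 * p 2 * h 1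
      + (p 1 ^ 2 + 3 * p 0 * p 2 ^ 2) * h 2 := by
  rw [fC_eq_aux]
  have e (i : Fin 3) : HasFDerivAt (fun v : Fin 3 → ℂ => v i)
      (ContinuousLinearMap.proj (R := ℂ) (φ := fun _ : Fin 3 => ℂ) i) p :=
    (ContinuousLinearMap.proj (R := ℂ) (φ := fun _ : Fin 3 => ℂ) i).hasFDerivAt
  refine ⟨_, (((e 0).mul ((e 2).pow 3)).add ((e 0).pow 3)).add (((e 1).pow 2).mul (e 2)), ?_⟩
  intro h
  simp
  ring

theorem stmt_11 :
    ∃ C D : Matrix (Fin 3) (Fin 3) ℕ,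
      |detZ D| = 1 ∧
      Bmat ![3, 5, 9] = C * D ∧
      (∀ j, (∑ i : Fin 3, D i j) = ![3, 5, 9] j) ∧
      (∃ σ : Equiv.Perm (Fin 3),
        ∀ x y z : ℂ, fC C (fun i => ![x, y, z] (σ i)) = x ^ 3 + y ^ 2 * z + x * z ^ 3) ∧
      IsolatedCriticalAtZero (fC C) := by
  refine ⟨!![1,0,3;3,0,0;0,2,1], !![1,2,3;1,2,4;1,1,2], ?_, ?_, ?_, ⟨1, ?_⟩, ?_, 1, one_pos, ?_⟩
  · simp [detZ, Matrix.det_fin_three]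
  · ext i j
    fin_cases i <;> fin_cases j <;> simp [Bmat, Matrix.mul_apply, Fin.sum_univ_three]
  · intro j
    fin_cases j <;> simp [Fin.sum_univ_three]
  · intro x y z
    rw [fC_eq_aux]
    simp
    ring
  · obtain ⟨L, hL, h⟩ := fC_deriv_aux 0
    rw [hL.fderiv]
    ext v
    simp [h]
  · intro p hp _ h0
    obtain ⟨L, hL, h⟩ := fC_deriv_aux p
    rw [hL.fderiv] at h0
    subst h0
    have h1 := (h (Pi.single 0 1)).symm
    have h2 := (h (Pi.single 1 1)).symm
    have h3 := (h (Pi.single 2 1)).symm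
    simp at h1 h2 h3
    apply hp
    have key : p 2 = 0 := by
      rcases h2 with h2 | h2
      · simp [h2] at h3
        rcases h3 with h3 | h3
        · simpa [h3] using h1
        · exact h3
      · exact h2
    simp [key] at h1 h3
    funext i
    fin_cases i <;> simp [h1, h3, key]
end
end
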